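/- arXiv:1208.2031 — 2 statements merged into one kernel-verified Lean document; each statement's English description precedes it below -/
import Mathlib

section
/- Let A be an associative unital algebra over ℝ, let D and T be elements of A, let n be a natural number with n ≥ 2, and let s be a real number. Then (D + s•T)² − (1/n)•(D + 3s•T)² = ((n−1)/n)•(D + (s(n−3)/(n−1))•T)² + (4s²/(1−n))•T², and moreover D + (s(n−3)/(n−1))•T = (D + 3s•T) − (2sn/(n−1))•T, so the same difference also equals ((n−1)/n)•((D + 3s•T) − (2sn/(n−1))•T)² + (4s²/(1−n))•T². -/
/-!
For weights `w + v = 1`, the weighted mean of two squares exceeds the square of the weighted mean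
by `w v` times the square of the difference; this holds without commutativity. The calculation is
`(n - 1) / n` times this identity for `D + s • T` and `D + (3 * s) • T` with weights `n / (n - 1)`
and `-1 / (n - 1)`: the difference of the two points is a multiple of `T`, so the correction term is
a multiple of `T ^ 2`.
-/

section WeightedSquares

variable {R A : Type*} [CommRing R] [Ring A] [Algebra R A] {w v : R}

theorem smul_sq_add_smul_sq_of_add_eq_one (h : w + v = 1) (x y : A) :
    w • x ^ 2 + v • y ^ 2 = (w • x + v • y) ^ 2 + (w * v) • (x - y) ^ 2 := by
  obtain rfl : v = 1 - w := eq_sub_of_add_eq' h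
  simp only [pow_two, add_mul, mul_add, sub_mul, mul_sub, smul_mul_assoc, mul_smul_comm]
  module

theorem smul_sq_add_smul_add_smul_sq_of_add_eq_one (h : w + v = 1) (D T : A) (a b : R) :
    w • (D + a • T) ^ 2 + v • (D + b • T) ^ 2
      = (D + (w * a + v * b) • T) ^ 2 + (w * v * (a - b) ^ 2) • T ^ 2 := by
  have mean : w • (D + a • T) + v • (D + b • T) = D + (w * a + v * b) • T := by
    obtain rfl : v = 1 - w := eq_sub_of_add_eq' h
    module
  have difference : (D + a • T) - (D + b • T) = (a - b) • T := by module
  rw [smul_sq_add_smul_sq_of_add_eq_one h, mean, difference, smul_pow, smul_smul]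

end WeightedSquares

section Field

variable {K A : Type*} [Field K] {n : K}

theorem add_smul_eq_add_three_mul_smul_sub [AddCommGroup A] [Module K A] (D T : A) (hn : n ≠ 1)
    (s : K) :
    D + (s * (n - 3) / (n - 1)) • T = (D + (3 * s) • T) - (2 * s * n / (n - 1)) • T := by
  have hn' : n - 1 ≠ 0 := sub_ne_zero.mpr hn
  have coefficient : s * (n - 3) / (n - 1) = 3 * s - 2 * s * n / (n - 1) := by
    field_simp
    ring
  rw [coefficient, sub_smul, add_sub_assoc]

variable [Ring A] [Algebra K A]

theorem sq_add_smul_sub_one_div_smul_sq (D T : A) (hn₀ : n ≠ 0) (hn₁ : n ≠ 1) (s : K) :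
    (D + s • T) ^ 2 - (1 / n) • (D + (3 * s) • T) ^ 2
      = ((n - 1) / n) • (D + (s * (n - 3) / (n - 1)) • T) ^ 2
        + (4 * s ^ 2 / (1 - n)) • T ^ 2 := by
  have hn : n - 1 ≠ 0 := sub_ne_zero.mpr hn₁
  have weights : n / (n - 1) + -1 / (n - 1) = 1 := by
    field_simp
    ring
  have mean : n / (n - 1) * s + -1 / (n - 1) * (3 * s) = s * (n - 3) / (n - 1) := by
    ring
  have correction : (n - 1) / n * (n / (n - 1) * (-1 / (n - 1)) * (s - 3 * s) ^ 2)
      = 4 * s ^ 2 / (1 - n) := by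
    rw [← neg_sub n 1]
    field_simp
    ring
  calc (D + s • T) ^ 2 - (1 / n) • (D + (3 * s) • T) ^ 2
      = ((n - 1) / n) •
          ((n / (n - 1)) • (D + s • T) ^ 2 + (-1 / (n - 1)) • (D + (3 * s) • T) ^ 2) := by
        match_scalars <;> field_simp
    _ = ((n - 1) / n) • (D + (s * (n - 3) / (n - 1)) • T) ^ 2
          + (4 * s ^ 2 / (1 - n)) • T ^ 2 := by
        rw [smul_sq_add_smul_add_smul_sq_of_add_eq_one weights, mean, smul_add, smul_smul,
          correction]

theorem fundamental_calculation_general (D T : A) (hn₀ : n ≠ 0) (hn₁ : n ≠ 1) (s : K) :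
    ((D + s • T) ^ 2 - (1 / n) • (D + (3 * s) • T) ^ 2
        = ((n - 1) / n) • (D + (s * (n - 3) / (n - 1)) • T) ^ 2
          + (4 * s ^ 2 / (1 - n)) • T ^ 2)
    ∧ (D + (s * (n - 3) / (n - 1)) • T
        = (D + (3 * s) • T) - (2 * s * n / (n - 1)) • T)
    ∧ ((D + s • T) ^ 2 - (1 / n) • (D + (3 * s) • T) ^ 2
        = ((n - 1) / n) • ((D + (3 * s) • T) - (2 * s * n / (n - 1)) • T) ^ 2
          + (4 * s ^ 2 / (1 - n)) • T ^ 2) := by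
  have squares := sq_add_smul_sub_one_div_smul_sq D T hn₀ hn₁ s
  have shift := add_smul_eq_add_three_mul_smul_sub D T hn₁ s
  exact ⟨squares, shift, shift ▸ squares⟩

end Field

/-- The fundamental algebraic calculation (Lemma 3.2): for elements `D`, `T` of an
associative unital `ℝ`-algebra `A`, a natural number `n ≥ 2` and a real `s`, the
difference `(D + s•T)² − (1/n)•(D + 3s•T)²` can be rewritten as
`((n−1)/n)•(D + (s(n−3)/(n−1))•T)² + (4s²/(1−n))•T²`; moreover
`D + (s(n−3)/(n−1))•T = (D + 3s•T) − (2sn/(n−1))•T`, so the difference also equals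
`((n−1)/n)•((D + 3s•T) − (2sn/(n−1))•T)² + (4s²/(1−n))•T²`. -/
theorem fundamental_calculation {A : Type*} [Ring A] [Algebra ℝ A]
    (D T : A) (n : ℕ) (hn : 2 ≤ n) (s : ℝ) :
    ((D + s • T) ^ 2 - ((1 : ℝ) / (n : ℝ)) • (D + (3 * s) • T) ^ 2
        = (((n : ℝ) - 1) / (n : ℝ)) • (D + (s * ((n : ℝ) - 3) / ((n : ℝ) - 1)) • T) ^ 2
          + (4 * s ^ 2 / (1 - (n : ℝ))) • T ^ 2)
    ∧ (D + (s * ((n : ℝ) - 3) / ((n : ℝ) - 1)) • T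
        = (D + (3 * s) • T) - (2 * s * (n : ℝ) / ((n : ℝ) - 1)) • T)
    ∧ ((D + s • T) ^ 2 - ((1 : ℝ) / (n : ℝ)) • (D + (3 * s) • T) ^ 2
        = (((n : ℝ) - 1) / (n : ℝ))
            • ((D + (3 * s) • T) - (2 * s * (n : ℝ) / ((n : ℝ) - 1)) • T) ^ 2
          + (4 * s ^ 2 / (1 - (n : ℝ))) • T ^ 2) := by
  exact fundamental_calculation_general D T (Nat.cast_ne_zero.mpr (by lia))
    (Nat.cast_ne_one.mpr (by lia)) s
end

section
/- Let T ∈ Λ³V be a 3-form and set σ_T := (1/2)·Σᵢ (eᵢ⨼T)∧(eᵢ⨼T) ∈ Λ⁴V. Then in Cl(V) one has Σᵢ (eᵢ⨼T)·(eᵢ⨼T) = 2·σ_T − 3·‖T‖²·1, where the products on the left are Clifford products of the elements of Cl(V) corresponding to the 2-forms eᵢ⨼T, σ_T is regarded as an element of Cl(V) under the canonical identification, and ‖T‖² is the squared norm of T induced by ⟨·,·⟩ (for which the forms e_i∧e_j∧e_k, i<j<k, are orthonormal). -/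
noncomputable section

/-- The quadratic form `Q(v) = −⟨v,v⟩ = −‖v‖²` on `V = ℝⁿ`, so that in `Cl(V)` one has
`v·v = −‖v‖²` and `v·w + w·v = −2⟨v,w⟩`. -/
def negQ (n : ℕ) : QuadraticForm ℝ (Fin n → ℝ) :=
  QuadraticMap.weightedSumSquares ℝ (fun _ : Fin n => (-1 : ℝ))

/-- The orthonormal basis vector `eᵢ` viewed inside the Clifford algebra `Cl(V)`. -/
def eCl (n : ℕ) (i : Fin n) : CliffordAlgebra (negQ n) :=
  CliffordAlgebra.ι (negQ n) (Pi.single i 1)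

/-- The orthonormal basis vector `eᵢ` viewed inside the exterior algebra `ΛV`. -/
def eExt (n : ℕ) (i : Fin n) : ExteriorAlgebra ℝ (Fin n → ℝ) :=
  ExteriorAlgebra.ι ℝ (Pi.single i 1)

/-- The dual functional `⟨eᵢ, ·⟩` of `eᵢ` with respect to the inner product, i.e. the
`i`-th coordinate functional. -/
def coordDual (n : ℕ) (i : Fin n) : Module.Dual ℝ (Fin n → ℝ) := LinearMap.proj i

/-- Interior contraction `eᵢ⨼ ·` on the exterior algebra `ΛV` (the exterior algebra is
the Clifford algebra of the zero form, and `contractLeft` is contraction). -/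
def contr (n : ℕ) (i : Fin n) :
    ExteriorAlgebra ℝ (Fin n → ℝ) →ₗ[ℝ] ExteriorAlgebra ℝ (Fin n → ℝ) :=
  CliffordAlgebra.contractLeft (Q := (0 : QuadraticForm ℝ (Fin n → ℝ))) (coordDual n i)

/-- The canonical linear identification `ΛV ≅ Cl(V)` sending
`e_{i₁} ∧ ⋯ ∧ e_{i_k}` (for `i₁ < ⋯ < i_k`) to the Clifford product
`e_{i₁} ⋯ e_{i_k}`. -/
def phi (n : ℕ) : ExteriorAlgebra ℝ (Fin n → ℝ) ≃ₗ[ℝ] CliffordAlgebra (negQ n) :=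
  (CliffordAlgebra.equivExterior (negQ n)).symm


/-- The 4-form `σ_T := (1/2)·Σᵢ (eᵢ⨼T) ∧ (eᵢ⨼T) ∈ Λ⁴V` associated to a 3-form `T`
(products taken in the exterior algebra, i.e. wedge products). -/
def sigmaT (n : ℕ) (T : ExteriorAlgebra ℝ (Fin n → ℝ)) : ExteriorAlgebra ℝ (Fin n → ℝ) :=
  ((1 : ℝ) / 2) • ∑ i, contr n i T * contr n i T

/- Left Clifford multiplication by a vector `v` corresponds, on the exterior algebra, to
`x ↦ v ∧ x - v ⨼ x`. Applying this twice, the Clifford product of two bivectors has parts of degree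
four (the wedge product), two (half their commutator) and zero (minus their inner product). The part
of degree two is alternating, so it disappears from the square of a sum of bivectors, and
`ω · ω = ω ∧ ω - ‖ω‖²` for every 2-form `ω`. Summing over `ω = eᵢ ⨼ T`, each coefficient of `T` on
`eᵢ ∧ eⱼ ∧ eₖ` is counted three times, once for each factor that can be contracted. -/

section GeneralForm

open CliffordAlgebra

open LinearMap (BilinForm)

variable {R M : Type*} [CommRing R] [AddCommGroup M] [Module R M]

section Contraction

variable {Q : QuadraticForm R M}

theorem contractLeft_ι_mul_ι (d : Module.Dual R M) (u v : M) :
    contractLeft d (ι Q u * ι Q v) = d u • ι Q v - d v • ι Q u := by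
  rw [contractLeft_ι_mul, contractLeft_ι, ← Algebra.commutes, ← Algebra.smul_def]

theorem contractLeft_ι_mul_ι_mul_ι (d : Module.Dual R M) (u v w : M) :
    contractLeft d (ι Q u * ι Q v * ι Q w) =
      d u • (ι Q v * ι Q w) - d v • (ι Q u * ι Q w) + d w • (ι Q u * ι Q v) := by
  rw [mul_assoc, contractLeft_ι_mul, contractLeft_ι_mul_ι, mul_sub, mul_smul_comm, mul_smul_comm]
  abel

end Contraction

section ChangeForm

variable {Q Q' : QuadraticForm R M} {B : BilinForm R M} (h : B.toQuadraticMap = Q' - Q)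

theorem ι_mul_changeForm (v : M) (x : CliffordAlgebra Q) :
    ι Q' v * changeForm h x = changeForm h (ι Q v * x + contractLeft (B v) x) := by
  rw [map_add, changeForm_ι_mul, changeForm_contractLeft, sub_add_cancel]

theorem changeForm_ι_mul_ι_mul_changeForm (u v : M) (x : CliffordAlgebra Q) :
    changeForm h (ι Q u * ι Q v) * changeForm h x =
      changeForm h (ι Q u * ι Q v * x
        + (ι Q u * contractLeft (B v) x - ι Q v * contractLeft (B u) x)
        + contractLeft (B u) (contractLeft (B v) x)) := by
  rw [changeForm_ι_mul_ι, sub_mul, mul_assoc, ι_mul_changeForm, ι_mul_changeForm,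
    ← Algebra.smul_def, ← map_smul, ← map_sub, map_add, contractLeft_ι_mul, mul_add, mul_assoc]
  congr 1
  abel

theorem equivExterior_symm_apply [Invertible (2 : R)] {B : BilinForm R M}
    (h : B.toQuadraticMap = Q - 0) (hB : B.IsSymm) (x : ExteriorAlgebra R M) :
    (equivExterior Q).symm x = changeForm h x := by
  have hB' : B = -QuadraticMap.associated (-Q) := by
    rw [map_neg, ← sub_zero Q, ← h, QuadraticMap.associated_left_inverse R hB.eq]
    exact (neg_neg B).symm
  subst hB'
  rfl

end ChangeForm

section Bivector

/-- The inner product of the bivectors `u ∧ v` and `u' ∧ v'` induced by `B`, as a Gram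
determinant. -/
def bivectorInner (B : BilinForm R M) (u v u' v' : M) : R :=
  B u u' * B v v' - B u v' * B v u'

/-- The part of degree two of the Clifford product of the bivectors `u ∧ v` and `u' ∧ v'`, as an
element of the exterior algebra. It is half the commutator of the two bivectors. -/
def bivectorBracket (B : BilinForm R M) (u v u' v' : M) : ExteriorAlgebra R M :=
  ι 0 u * contractLeft (B v) (ι 0 u' * ι 0 v') - ι 0 v * contractLeft (B u) (ι 0 u' * ι 0 v')

theorem bivectorBracket_eq (B : BilinForm R M) (u v u' v' : M) :
    bivectorBracket B u v u' v' =
      (B v u' • (ι 0 u * ι 0 v') - B v v' • (ι 0 u * ι 0 u'))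
        - (B u u' • (ι 0 v * ι 0 v') - B u v' • (ι 0 v * ι 0 u')) := by
  simp only [bivectorBracket, contractLeft_ι_mul_ι, mul_sub, mul_smul_comm]

theorem ι_mul_ι_eq_neg_swap (u v : M) :
    ι (0 : QuadraticForm R M) u * ι 0 v = -(ι 0 v * ι 0 u) :=
  eq_neg_of_add_eq_zero_left (ExteriorAlgebra.ι_add_mul_swap u v)

theorem bivectorBracket_self {B : BilinForm R M} (hB : B.IsSymm) (u v : M) :
    bivectorBracket B u v u v = 0 := by
  rw [bivectorBracket_eq, ExteriorAlgebra.ι_sq_zero, ExteriorAlgebra.ι_sq_zero,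
    ι_mul_ι_eq_neg_swap v u, hB.eq v u]
  simp

theorem bivectorBracket_swap {B : BilinForm R M} (hB : B.IsSymm) (u v u' v' : M) :
    bivectorBracket B u' v' u v = -bivectorBracket B u v u' v' := by
  rw [bivectorBracket_eq, bivectorBracket_eq, hB.eq v' u, hB.eq v' v, hB.eq u' u, hB.eq u' v,
    ι_mul_ι_eq_neg_swap u' v, ι_mul_ι_eq_neg_swap u' u, ι_mul_ι_eq_neg_swap v' v,
    ι_mul_ι_eq_neg_swap v' u]
  module

theorem contractLeft_contractLeft_ι_mul_ι (B : BilinForm R M) (u v u' v' : M) :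
    contractLeft (B u) (contractLeft (B v) (ι (0 : QuadraticForm R M) u' * ι 0 v')) =
      -bivectorInner B u v u' v' • 1 := by
  rw [contractLeft_ι_mul_ι, map_sub, map_smul, map_smul, contractLeft_ι, contractLeft_ι,
    Algebra.algebraMap_eq_smul_one, Algebra.algebraMap_eq_smul_one, bivectorInner]
  module

variable {Q : QuadraticForm R M} {B : BilinForm R M} (h : B.toQuadraticMap = Q - 0)

theorem changeForm_bivector_mul_bivector (u v u' v' : M) :
    changeForm h (ι 0 u * ι 0 v) * changeForm h (ι 0 u' * ι 0 v') =
      changeForm h (ι 0 u * ι 0 v * (ι 0 u' * ι 0 v')) + changeForm h (bivectorBracket B u v u' v')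
        - bivectorInner B u v u' v' • 1 := by
  rw [changeForm_ι_mul_ι_mul_changeForm, contractLeft_contractLeft_ι_mul_ι, ← bivectorBracket,
    map_add, map_add, map_smul, changeForm_one, neg_smul, sub_eq_add_neg]

theorem sum_sum_eq_zero_of_alternating {κ A : Type*} [AddCommGroup A] (s : Finset κ)
    {f : κ → κ → A} (hself : ∀ p, f p p = 0) (hswap : ∀ p q, f q p = -f p q) :
    ∑ p ∈ s, ∑ q ∈ s, f p q = 0 := by
  classical
  rw [← Finset.sum_product']
  refine Finset.sum_involution (fun p _ ↦ p.swap) (fun p _ ↦ ?_) (fun p _ hp hfix ↦ hp ?_)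
    (fun p hp ↦ Finset.mem_product.mpr (Finset.mem_product.mp hp).symm) (fun p _ ↦ p.swap_swap)
  · exact (congrArg (f p.1 p.2 + ·) (hswap p.1 p.2)).trans (add_neg_cancel _)
  · rw [show p.1 = p.2 from congrArg Prod.snd hfix, hself]

theorem changeForm_sum_bivector_mul_self (hB : B.IsSymm) {κ : Type*} (s : Finset κ)
    (u v : κ → M) :
    changeForm h (∑ p ∈ s, ι 0 (u p) * ι 0 (v p)) * changeForm h (∑ p ∈ s, ι 0 (u p) * ι 0 (v p)) =
      changeForm h ((∑ p ∈ s, ι 0 (u p) * ι 0 (v p)) * ∑ p ∈ s, ι 0 (u p) * ι 0 (v p))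
        - (∑ p ∈ s, ∑ q ∈ s, bivectorInner B (u p) (v p) (u q) (v q)) • 1 := by
  have bracket_sum : ∑ p ∈ s, ∑ q ∈ s,
      changeForm h (bivectorBracket B (u p) (v p) (u q) (v q)) = 0 :=
    sum_sum_eq_zero_of_alternating s
      (fun p ↦ by rw [bivectorBracket_self hB, map_zero])
      (fun p q ↦ by rw [bivectorBracket_swap hB, map_neg])
  simp only [map_sum, Finset.sum_mul_sum, changeForm_bivector_mul_bivector,
    Finset.sum_sub_distrib, Finset.sum_add_distrib, bracket_sum, add_zero, Finset.sum_smul]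

end Bivector

section Orthogonal

variable {Q : QuadraticForm R M} {B : BilinForm R M} {κ : Type*} {e : κ → M}

theorem apply_eq_ite_of_isOrthoᵢ [DecidableEq κ] (h : B.toQuadraticMap = Q - 0)
    (he : B.IsOrthoᵢ e) (i j : κ) : B (e i) (e j) = if i = j then Q (e i) else 0 := by
  split_ifs with hij
  · rw [← hij, ← LinearMap.BilinMap.toQuadraticMap_apply, h, sub_zero]
  · exact he hij

theorem changeForm_twoForm_mul_self [Fintype κ] (h : B.toQuadraticMap = Q - 0) (hB : B.IsSymm)
    (he : B.IsOrthoᵢ e) (w : κ → κ → R) {ω : ExteriorAlgebra R M}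
    (hω : ω = ∑ j, ∑ k, w j k • (ι 0 (e j) * ι 0 (e k))) :
    changeForm h ω * changeForm h ω = changeForm h (ω * ω)
      - (∑ j, ∑ k, Q (e j) * Q (e k) * (w j k ^ 2 - w j k * w k j)) • 1 := by
  classical
  have hω' : ω = ∑ p : κ × κ, ι 0 (w p.1 p.2 • e p.1) * ι 0 (e p.2) := by
    simp only [hω, map_smul, smul_mul_assoc, Fintype.sum_prod_type]
  have inner_sum : ∑ p : κ × κ, ∑ q : κ × κ,
      bivectorInner B (w p.1 p.2 • e p.1) (e p.2) (w q.1 q.2 • e q.1) (e q.2) =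
        ∑ j, ∑ k, Q (e j) * Q (e k) * (w j k ^ 2 - w j k * w k j) := by
    simp only [bivectorInner, Fintype.sum_prod_type, map_smul, LinearMap.smul_apply, smul_eq_mul,
      apply_eq_ite_of_isOrthoᵢ h he]
    refine Finset.sum_congr rfl fun j _ ↦ Finset.sum_congr rfl fun k _ ↦ ?_
    simp only [mul_ite, mul_zero, ite_mul, zero_mul, Finset.sum_sub_distrib, Finset.sum_ite_eq,
      Finset.mem_univ, if_true, Finset.sum_ite_irrel, Finset.sum_const_zero]
    ring
  rw [← inner_sum, hω']
  exact changeForm_sum_bivector_mul_self h hB _ _ _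

end Orthogonal

section ThreeForm

variable {κ : Type*}

/-- The coefficient of `eⱼ ∧ eₖ` in the contraction `eᵢ ⨼ T` of the 3-form
`T = ∑ c i j k • eᵢ ∧ eⱼ ∧ eₖ`, where the sum is over all triples of indices. -/
def contractionCoeff (c : κ → κ → κ → R) (i j k : κ) : R :=
  c i j k - c j i k + c j k i

theorem contractLeft_threeForm [Fintype κ] [DecidableEq κ] {Q : QuadraticForm R M} {e : κ → M}
    (c : κ → κ → κ → R) {d : Module.Dual R M} {i : κ} (hd : ∀ j, d (e j) = if i = j then 1 else 0) :
    contractLeft d (∑ j, ∑ k, ∑ l, c j k l • (ι Q (e j) * ι Q (e k) * ι Q (e l))) =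
      ∑ j, ∑ k, contractionCoeff c i j k • (ι Q (e j) * ι Q (e k)) := by
  simp only [map_sum, map_smul, contractLeft_ι_mul_ι_mul_ι, hd, smul_add, smul_sub, ite_smul,
    one_smul, zero_smul, smul_ite, smul_zero, Finset.sum_add_distrib, Finset.sum_sub_distrib,
    Finset.sum_ite_eq, Finset.mem_univ, if_true, Finset.sum_ite_irrel, Finset.sum_const_zero,
    contractionCoeff, add_smul, sub_smul]

variable [LinearOrder κ] {c : κ → κ → κ → R}

theorem contractionCoeff_eq_zero_of_not_lt (hc : ∀ i j k, ¬(i < j ∧ j < k) → c i j k = 0)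
    (i : κ) {j k : κ} (hjk : ¬j < k) : contractionCoeff c i j k = 0 := by
  rw [contractionCoeff, hc i j k (by grind), hc j i k (by grind), hc j k i (by grind)]
  simp

theorem coeff_mul_coeff_eq_zero (hc : ∀ i j k, ¬(i < j ∧ j < k) → c i j k = 0) {i j k i' j' k' : κ}
    (hne : ¬((i < j ∧ j < k) ∧ i' < j' ∧ j' < k')) : c i j k * c i' j' k' = 0 := by
  rcases not_and_or.mp hne with hijk | hijk'
  · rw [hc i j k hijk, zero_mul]
  · rw [hc i' j' k' hijk', mul_zero]

theorem contractionCoeff_sq (hc : ∀ i j k, ¬(i < j ∧ j < k) → c i j k = 0) (i j k : κ) :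
    contractionCoeff c i j k ^ 2 = c i j k ^ 2 + c j i k ^ 2 + c j k i ^ 2 := by
  have h₁ : c i j k * c j i k = 0 := coeff_mul_coeff_eq_zero hc (by grind)
  have h₂ : c i j k * c j k i = 0 := coeff_mul_coeff_eq_zero hc (by grind)
  have h₃ : c j i k * c j k i = 0 := coeff_mul_coeff_eq_zero hc (by grind)
  rw [contractionCoeff]
  linear_combination -2 * h₁ + 2 * h₂ - 2 * h₃

theorem sum_contractionCoeff_sq [Fintype κ] (hc : ∀ i j k, ¬(i < j ∧ j < k) → c i j k = 0)
    (q : κ → R) :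
    ∑ i, q i * ∑ j, ∑ k, q j * q k *
        (contractionCoeff c i j k ^ 2 - contractionCoeff c i j k * contractionCoeff c i k j) =
      3 * ∑ i, ∑ j, ∑ k, q i * q j * q k * c i j k ^ 2 := by
  let f (i j k : κ) : R := q i * q j * q k * c i j k ^ 2
  have summand (i j k : κ) : q i * (q j * q k *
      (contractionCoeff c i j k ^ 2 - contractionCoeff c i j k * contractionCoeff c i k j)) =
        f i j k + f j i k + f j k i := by
    have cross : contractionCoeff c i j k * contractionCoeff c i k j = 0 := by
      rcases lt_or_ge j k with hjk | hkj
      · rw [contractionCoeff_eq_zero_of_not_lt hc i hjk.not_gt, mul_zero]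
      · rw [contractionCoeff_eq_zero_of_not_lt hc i hkj.not_gt, zero_mul]
    rw [cross, contractionCoeff_sq hc]
    ring
  have swap : ∑ i, ∑ j, ∑ k, f j i k = ∑ i, ∑ j, ∑ k, f i j k := Finset.sum_comm
  have rotate : ∑ i, ∑ j, ∑ k, f j k i = ∑ i, ∑ j, ∑ k, f i j k := by
    rw [Finset.sum_comm]
    exact Finset.sum_congr rfl fun _ _ ↦ Finset.sum_comm
  simp only [Finset.mul_sum, summand, Finset.sum_add_distrib, swap, rotate]
  simp only [← Finset.mul_sum]
  ring

theorem sum_smul_changeForm_contractLeft_mul_self [Fintype κ] {Q : QuadraticForm R M}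
    {B : BilinForm R M} (h : B.toQuadraticMap = Q - 0) (hB : B.IsSymm) {e : κ → M}
    (he : B.IsOrthoᵢ e) {d : κ → Module.Dual R M}
    (hd : ∀ i j, d i (e j) = if i = j then 1 else 0) (a : κ → κ → κ → R) (T : ExteriorAlgebra R M)
    (hT : T = ∑ i, ∑ j, ∑ k, if i < j ∧ j < k
        then a i j k • (ι 0 (e i) * ι 0 (e j) * ι 0 (e k)) else 0) :
    ∑ i, Q (e i) • (changeForm h (contractLeft (d i) T) * changeForm h (contractLeft (d i) T)) =
      changeForm h (∑ i, Q (e i) • (contractLeft (d i) T * contractLeft (d i) T))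
        - (3 * ∑ i, ∑ j, ∑ k, Q (e i) * Q (e j) * Q (e k) *
            if i < j ∧ j < k then a i j k ^ 2 else 0) • 1 := by
  let c (i j k : κ) : R := if i < j ∧ j < k then a i j k else 0
  have hc (i j k : κ) (hijk : ¬(i < j ∧ j < k)) : c i j k = 0 := if_neg hijk
  have contraction (i : κ) : contractLeft (d i) T =
      ∑ j, ∑ k, contractionCoeff c i j k • (ι 0 (e j) * ι 0 (e k)) := by
    rw [← contractLeft_threeForm c (hd i), hT]
    simp only [c, ite_smul, zero_smul]
  have coeff_sq (i j k : κ) : (if i < j ∧ j < k then a i j k ^ 2 else 0) = c i j k ^ 2 := by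
    simp only [c, ite_pow, ne_eq, OfNat.ofNat_ne_zero, not_false_eq_true, zero_pow]
  simp only [changeForm_twoForm_mul_self h hB he _ (contraction _), smul_sub, smul_smul,
    Finset.sum_sub_distrib, ← Finset.sum_smul, map_sum, map_smul, coeff_sq,
    sum_contractionCoeff_sq hc]

theorem sum_contraction_squares_general [Fintype κ] {Q : QuadraticForm R M} {B : BilinForm R M}
    (h : B.toQuadraticMap = Q - 0) (hB : B.IsSymm) {e : κ → M} (he : B.IsOrthoᵢ e)
    (hQ : ∀ i, Q (e i) = -1) {d : κ → Module.Dual R M}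
    (hd : ∀ i j, d i (e j) = if i = j then 1 else 0) (a : κ → κ → κ → R) (T : ExteriorAlgebra R M)
    (hT : T = ∑ i, ∑ j, ∑ k, if i < j ∧ j < k
        then a i j k • (ι 0 (e i) * ι 0 (e j) * ι 0 (e k)) else 0) :
    ∑ i, changeForm h (contractLeft (d i) T) * changeForm h (contractLeft (d i) T) =
      changeForm h (∑ i, contractLeft (d i) T * contractLeft (d i) T)
        - (3 * ∑ i, ∑ j, ∑ k, if i < j ∧ j < k then a i j k ^ 2 else 0) • 1 := by
  have weighted := sum_smul_changeForm_contractLeft_mul_self h hB he hd a T hT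
  simp only [hQ, neg_smul, one_smul, neg_mul, one_mul, neg_neg, Finset.sum_neg_distrib, map_neg,
    mul_neg] at weighted
  rw [← neg_inj, weighted]
  abel

end ThreeForm

end GeneralForm

section Euclidean

variable {n : ℕ}

theorem negQ_apply (v : Fin n → ℝ) : negQ n v = -(v ⬝ᵥ v) := by
  simp [negQ, dotProduct, QuadraticMap.weightedSumSquares_apply]

theorem negQ_single (i : Fin n) : negQ n (Pi.single i 1) = -1 := by
  rw [negQ_apply, single_one_dotProduct, Pi.single_eq_same]

theorem coordDual_single (i j : Fin n) :
    coordDual n i (Pi.single j 1) = if i = j then 1 else 0 :=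
  Pi.single_apply j 1 i

theorem two_smul_sigmaT (T : ExteriorAlgebra ℝ (Fin n → ℝ)) :
    (2 : ℝ) • sigmaT n T = ∑ i, contr n i T * contr n i T := by
  rw [sigmaT, smul_smul, mul_one_div_cancel two_ne_zero, one_smul]

/-- The symmetric bilinear form `−⟨u,v⟩` whose quadratic form is `negQ n`. -/
def negInner (n : ℕ) : LinearMap.BilinForm ℝ (Fin n → ℝ) :=
  -dotProductBilin ℝ ℝ

theorem negInner_apply (u v : Fin n → ℝ) : negInner n u v = -(u ⬝ᵥ v) :=
  rfl

theorem toQuadraticMap_negInner : (negInner n).toQuadraticMap = negQ n - 0 := by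
  ext v
  rw [sub_zero, negQ_apply, LinearMap.BilinMap.toQuadraticMap_apply, negInner_apply]

theorem isSymm_negInner : (negInner n).IsSymm where
  eq u v := congrArg Neg.neg (dotProduct_comm u v)

theorem isOrthoᵢ_negInner_single : (negInner n).IsOrthoᵢ fun i ↦ Pi.single i 1 := by
  refine LinearMap.isOrthoᵢ_def.mpr fun i j hij ↦ ?_
  rw [negInner_apply, single_one_dotProduct, Pi.single_eq_of_ne hij, neg_zero]

theorem phi_apply (x : ExteriorAlgebra ℝ (Fin n → ℝ)) :
    phi n x = CliffordAlgebra.changeForm toQuadraticMap_negInner x :=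
  equivExterior_symm_apply _ isSymm_negInner x

end Euclidean

/-- Lemma C.1 (5): for a 3-form `T ∈ Λ³V` with coefficients `a i j k` on the
orthonormal forms `eᵢ∧eⱼ∧e_k` (`i<j<k`), one has in `Cl(V)` the identity
`Σᵢ (eᵢ⨼T)·(eᵢ⨼T) = 2σ_T − 3‖T‖²·1`, where the products on the left are Clifford
products of the 2-forms `eᵢ⨼T`, `σ_T` is regarded in `Cl(V)` via the canonical
identification, and `‖T‖² = Σ_{i<j<k} (a i j k)²`. -/
theorem sum_contraction_squares (n : ℕ) (a : Fin n → Fin n → Fin n → ℝ)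
    (T : ExteriorAlgebra ℝ (Fin n → ℝ))
    (hT : T = ∑ i, ∑ j, ∑ k, if i < j ∧ j < k
        then a i j k • (eExt n i * eExt n j * eExt n k) else 0)
    (normSqT : ℝ)
    (hnorm : normSqT = ∑ i, ∑ j, ∑ k, if i < j ∧ j < k then (a i j k) ^ 2 else 0) :
    ∑ i, phi n (contr n i T) * phi n (contr n i T)
      = (2 : ℝ) • phi n (sigmaT n T) - (3 * normSqT) • (1 : CliffordAlgebra (negQ n)) := by
  rw [← map_smul, two_smul_sigmaT, hnorm]
  simp only [phi_apply]
  exact sum_contraction_squares_general toQuadraticMap_negInner isSymm_negInner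
    isOrthoᵢ_negInner_single negQ_single coordDual_single a T hT
end
end
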